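/- Let a, b ∈ [0,1/2) and let A′, B′ be convex bodies in ℝ² with L_a ⊆ A′ ⊆ U_a and L_b ⊆ B′ ⊆ U_b. Then there exist homotheties h₁ with ratio λ(a,b) and h₂ with ratio λ(b,a) such that B′ ⊆ h₁(A′) and A′ ⊆ h₂(B′); consequently A′ ⊆ h₂(h₁(A′)) and the Banach–Mazur distance between A′ and B′ is at most λ(a,b)·λ(b,a). -/

import Mathlib

/-- A convex body in the plane: compact, convex, with nonempty interior. -/
def IsConvexBody (A : Set (ℝ × ℝ)) : Prop :=
  Convex ℝ A ∧ IsCompact A ∧ (interior A).Nonempty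

/-- The 7-gon `L_a` with vertices (0, 2a/(1+a)), (±1,1), (±2,2), (±1,3). -/
noncomputable def L (a : ℝ) : Set (ℝ × ℝ) :=
  convexHull ℝ {((0 : ℝ), 2 * a / (1 + a)), (1, 1), (-1, 1), (2, 2), (-2, 2), (1, 3), (-1, 3)}

/-- The polygon `U_a` from Definition 2.1. -/
noncomputable def U (a : ℝ) : Set (ℝ × ℝ) :=
  if a < 1 / 2 then
    convexHull ℝ {((a : ℝ), a), (-a, a), (2 + a, 2 - a), (-(2 + a), 2 - a),
      (3 - a, 3 - a), (-(3 - a), 3 - a), (3 - 2 * a, 3), (-(3 - 2 * a), 3),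
      (a, 4 - a), (-a, 4 - a)}
  else
    convexHull ℝ {((a : ℝ), a), (-a, a), (3 - 2 * a, 1), (-(3 - 2 * a), 1),
      (3 - a, 1 + a), (-(3 - a), 1 + a), (3 - a, 3 - a), (-(3 - a), 3 - a),
      (3 - 2 * a, 3), (-(3 - 2 * a), 3), (a, 4 - a), (-a, 4 - a)}

/-- The ratio λ(a,b) from Lemma 2.4. -/
noncomputable def lam (a b : ℝ) : ℝ :=
  if b ≤ 3 * a / (2 * (1 + 2 * a)) then 1 + (1 - b) * (1 + 2 * a) / (2 + a) else 3 / 2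

/-- The Banach–Mazur distance: the infimum of λ > 0 such that T(A) ⊆ B ⊆ h(T(A)) for some
invertible affine map T and homothety h with ratio λ. -/
noncomputable def BMdist (A B : Set (ℝ × ℝ)) : ℝ :=
  sInf {l : ℝ | 0 < l ∧ ∃ (T : ℝ × ℝ ≃ᵃ[ℝ] ℝ × ℝ) (c : ℝ × ℝ),
    T '' A ⊆ B ∧ B ⊆ AffineMap.homothety c l '' (T '' A)}

lemma L_mem (a x y : ℝ) (ha : 0 ≤ a) (ha2 : a < 1/2) (s : ℝ) (hs : s = 2 * a / (1 + a))
    (h1 : |x| ≤ y) (h2 : |x| + y ≤ 4) (h3 : y ≤ 3) (h4 : s + (1 - s) * |x| ≤ y) :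
    (x, y) ∈ L a := by
  have hconv : Convex ℝ (L a) := convex_convexHull ℝ _
  have hsub := subset_convexHull ℝ ({((0 : ℝ), 2 * a / (1 + a)), (1, 1), (-1, 1), (2, 2), (-2, 2), (1, 3), (-1, 3)} : Set (ℝ × ℝ))
  have e0 : ((0:ℝ), s) ∈ L a := hsub (by simp [hs])
  have e1 : ((1:ℝ), (1:ℝ)) ∈ L a := hsub (by simp)
  have e2 : ((-1:ℝ), (1:ℝ)) ∈ L a := hsub (by simp)
  have e3 : ((2:ℝ), (2:ℝ)) ∈ L a := hsub (by simp)
  have e4 : ((-2:ℝ), (2:ℝ)) ∈ L a := hsub (by simp)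
  have e5 : ((1:ℝ), (3:ℝ)) ∈ L a := hsub (by simp)
  have e6 : ((-1:ℝ), (3:ℝ)) ∈ L a := hsub (by simp)
  have hs0 : 0 ≤ s := by rw [hs]; positivity
  have hs1 : s < 1 := by rw [hs, div_lt_one (by linarith)]; linarith
  have x0 := abs_nonneg x
  have comb : ∀ {p q : ℝ × ℝ} (r : ℝ × ℝ) (u : ℝ), p ∈ L a → q ∈ L a → 0 ≤ u → u ≤ 1 →
      r.1 = (1 - u) * p.1 + u * q.1 → r.2 = (1 - u) * p.2 + u * q.2 → r ∈ L a := by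
    intro p q r u hp hq hu0 hu1 h h'
    have := hconv hp hq (by linarith : 0 ≤ 1 - u) hu0 (by ring)
    convert this using 1
    ext <;> simp [h, h']
  have slice : ∀ u : ℝ, (u, y) ∈ L a → (-u, y) ∈ L a → |x| ≤ u → (x, y) ∈ L a := by
    intro u hp hq hu
    obtain ⟨hl, hr⟩ := abs_le.1 hu
    rcases eq_or_lt_of_le (x0.trans hu) with h0 | h0
    · have : x = u := by linarith
      rw [this]; exact hp
    · refine comb (x, y) ((u - x) / (2 * u)) hp hq (div_nonneg (by linarith) (by linarith))
        ((div_le_one (by linarith)).2 (by linarith)) ?_ ?_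
      · simp only; field_simp; ring
      · simp only; ring
  rcases le_total y 1 with hy | hy
  · have hd : 0 < 1 - s := by linarith
    have hys : s ≤ y := by nlinarith
    have hu0 : 0 ≤ (y - s) / (1 - s) := div_nonneg (by linarith) hd.le
    have hu1 : (y - s) / (1 - s) ≤ 1 := (div_le_one hd).2 (by linarith)
    refine slice ((y - s) / (1 - s)) (comb _ _ e0 e1 hu0 hu1 ?_ ?_) (comb _ _ e0 e2 hu0 hu1 ?_ ?_) ?_
    · simp
    · simp only; field_simp; ring
    · simp
    · simp only; field_simp; ring
    · rw [le_div_iff₀ hd]; linarith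
  rcases le_total y 2 with hy2 | hy2
  · refine slice y (comb _ (y - 1) e1 e3 (by linarith) (by linarith) ?_ ?_)
      (comb _ (y - 1) e2 e4 (by linarith) (by linarith) ?_ ?_) h1
    all_goals simp only; ring
  · refine slice (4 - y) (comb _ (y - 2) e3 e5 (by linarith) (by linarith) ?_ ?_)
      (comb _ (y - 2) e4 e6 (by linarith) (by linarith) ?_ ?_) (by linarith)
    all_goals simp only; ring

lemma lam_params (a b : ℝ) (ha : 0 ≤ a) (ha2 : a < 1/2) (hb : 0 ≤ b) (hb2 : b < 1/2)
    (s : ℝ) (hs : s = 2 * a / (1 + a)) :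
    3 / 2 ≤ lam a b ∧ ∃ t : ℝ, t ≤ -2 * b ∧ t + s * lam a b ≤ b * s ∧
      6 - 2 * b ≤ 4 * lam a b + t ∧ 4 - b ≤ 3 * lam a b + t ∧
      t + s * lam a b ≤ s * (2 + b) - 2 * b := by
  have hs' : s * (1 + a) = 2 * a := by rw [hs]; field_simp
  have hs0 : 0 ≤ s := by rw [hs]; positivity
  have key : (2 + s) * (1 + a) = 2 * (1 + 2 * a) := by linarith
  unfold lam
  split_ifs with h
  · rw [le_div_iff₀ (by linarith)] at h
    have hl : ∀ l : ℝ, l = 1 + (1 - b) * (1 + 2 * a) / (2 + a) →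
        l * (2 + a) = (2 + a) + (1 - b) * (1 + 2 * a) := by
      intro l hl; rw [hl]; field_simp
    generalize 1 + (1 - b) * (1 + 2 * a) / (2 + a) = l at hl
    have hl := hl l rfl
    have h32 : 3 / 2 ≤ l := by
      by_contra hc
      push Not at hc
      nlinarith
    have h2 : l ≤ 2 - b := by
      by_contra hc
      push Not at hc
      nlinarith
    have hl4 : l * (4 - s) = 6 - 2 * b - b * s := by
      have h1a : (1 + a) ≠ 0 := by linarith
      apply mul_right_cancel₀ h1a
      linear_combination 2 * hl - (l - b) * hs'
    have hbs : b * (2 + s) ≤ 3 / 2 * s := by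
      by_contra hc
      push Not at hc
      nlinarith
    refine ⟨h32, b * s - s * l, ?_, by linarith, ?_, ?_, ?_⟩
    · nlinarith
    · nlinarith
    · nlinarith
    · nlinarith
  · rw [not_le, div_lt_iff₀ (by linarith)] at h
    have hbs : 3 / 2 * s ≤ b * (2 + s) := by
      by_contra hc
      push Not at hc
      nlinarith
    refine ⟨le_rfl, -2 * b, le_rfl, ?_, ?_, ?_, ?_⟩ <;> nlinarith

lemma U_sub (a b : ℝ) (ha : 0 ≤ a) (ha2 : a < 1/2) (hb : 0 ≤ b) (hb2 : b < 1/2) :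
    ∃ c : ℝ × ℝ, U b ⊆ AffineMap.homothety c (lam a b) '' L a := by
  obtain ⟨s, hs⟩ : ∃ s, s = 2 * a / (1 + a) := ⟨_, rfl⟩
  obtain ⟨hl, t, k1, k2, k3, k4, k5⟩ := lam_params a b ha ha2 hb hb2 s hs
  have hs0 : 0 ≤ s := by rw [hs]; positivity
  have hs1 : s < 1 := by rw [hs, div_lt_one (by linarith)]; linarith
  generalize lam a b = l at *
  have l0 : 0 < l := by linarith
  have l1 : 1 - l ≠ 0 := by linarith
  refine ⟨(0, t / (1 - l)), ?_⟩
  have hconv : Convex ℝ (AffineMap.homothety ((0:ℝ), t / (1 - l)) l '' L a) :=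
    (convex_convexHull ℝ _).affine_image _
  have mem : ∀ x y w : ℝ, |x| = w → w ≤ y - t → w + (y - t) ≤ 4 * l → y - t ≤ 3 * l →
      s * l + (1 - s) * w ≤ y - t →
      (x, y) ∈ AffineMap.homothety ((0:ℝ), t / (1 - l)) l '' L a := by
    intro x y w hw h1 h2 h3 h4
    refine ⟨(x / l, (y - t) / l), L_mem a _ _ ha ha2 s hs ?_ ?_ ?_ ?_, ?_⟩
    · rw [abs_div, abs_of_pos l0, hw]; gcongr
    · rw [abs_div, abs_of_pos l0, hw, ← add_div, div_le_iff₀ l0]; exact h2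
    · rw [div_le_iff₀ l0]; exact h3
    · rw [abs_div, abs_of_pos l0, hw, le_div_iff₀ l0]
      have : (s + (1 - s) * (w / l)) * l = s * l + (1 - s) * w := by field_simp
      linarith
    · rw [AffineMap.homothety_apply]
      ext
      · simp; field_simp
      · simp; field_simp; ring
  unfold U
  rw [if_pos hb2]
  refine convexHull_min ?_ hconv
  have sb : 0 ≤ s * b := mul_nonneg hs0 hb
  have sb2 : 0 ≤ s * (1 / 2 - b) := mul_nonneg hs0 (by linarith)
  intro p hp
  simp only [Set.mem_insert_iff, Set.mem_singleton_iff] at hp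
  rcases hp with rfl | rfl | rfl | rfl | rfl | rfl | rfl | rfl | rfl | rfl
  · exact mem _ _ b (abs_of_nonneg hb) (by linarith) (by linarith) (by linarith) (by linarith)
  · exact mem _ _ b (by rw [abs_neg, abs_of_nonneg hb]) (by linarith) (by linarith) (by linarith) (by linarith)
  · exact mem _ _ (2 + b) (abs_of_nonneg (by linarith)) (by linarith) (by linarith) (by linarith) (by linarith)
  · exact mem _ _ (2 + b) (by rw [abs_neg, abs_of_nonneg (by linarith)]) (by linarith) (by linarith) (by linarith) (by linarith)
  · exact mem _ _ (3 - b) (abs_of_nonneg (by linarith)) (by linarith) (by linarith) (by linarith) (by linarith)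
  · exact mem _ _ (3 - b) (by rw [abs_neg, abs_of_nonneg (by linarith)]) (by linarith) (by linarith) (by linarith) (by linarith)
  · exact mem _ _ (3 - 2 * b) (abs_of_nonneg (by linarith)) (by linarith) (by linarith) (by linarith) (by linarith)
  · exact mem _ _ (3 - 2 * b) (by rw [abs_neg, abs_of_nonneg (by linarith)]) (by linarith) (by linarith) (by linarith) (by linarith)
  · exact mem _ _ b (abs_of_nonneg hb) (by linarith) (by linarith) (by linarith) (by linarith)
  · exact mem _ _ b (by rw [abs_neg, abs_of_nonneg hb]) (by linarith) (by linarith) (by linarith) (by linarith)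

theorem stmt_11 (a b : ℝ) (ha : a ∈ Set.Ico (0 : ℝ) (1 / 2)) (hb : b ∈ Set.Ico (0 : ℝ) (1 / 2))
    (A' B' : Set (ℝ × ℝ)) (hA : IsConvexBody A') (hB : IsConvexBody B')
    (hLa : L a ⊆ A') (hUa : A' ⊆ U a) (hLb : L b ⊆ B') (hUb : B' ⊆ U b) :
    (∃ (c₁ c₂ : ℝ × ℝ),
      B' ⊆ AffineMap.homothety c₁ (lam a b) '' A' ∧
      A' ⊆ AffineMap.homothety c₂ (lam b a) '' B' ∧
      A' ⊆ AffineMap.homothety c₂ (lam b a) ''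
        (AffineMap.homothety c₁ (lam a b) '' A')) ∧
    BMdist A' B' ≤ lam a b * lam b a := by
  obtain ⟨ha, ha2⟩ := ha
  obtain ⟨hb, hb2⟩ := hb
  obtain ⟨c₁, h₁⟩ := U_sub a b ha ha2 hb hb2
  obtain ⟨c₂, h₂⟩ := U_sub b a hb hb2 ha ha2
  have g₁ : B' ⊆ AffineMap.homothety c₁ (lam a b) '' A' :=
    hUb.trans (h₁.trans (Set.image_mono hLa))
  have g₂ : A' ⊆ AffineMap.homothety c₂ (lam b a) '' B' :=
    hUa.trans (h₂.trans (Set.image_mono hLb))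
  refine ⟨⟨c₁, c₂, g₁, g₂, g₂.trans (Set.image_mono g₁)⟩, ?_⟩
  have k₁ := (lam_params a b ha ha2 hb hb2 _ rfl).1
  have k₂ := (lam_params b a hb hb2 ha ha2 _ rfl).1
  generalize lam a b = l at *
  generalize lam b a = m at *
  have m0 : m ≠ 0 := by linarith
  have hlm : 1 - l * m ≠ 0 := by nlinarith
  refine csInf_le ⟨0, fun x hx => hx.1.le⟩ ⟨by nlinarith, ?_⟩
  let T : ℝ × ℝ ≃ᵃ[ℝ] ℝ × ℝ := (AffineEquiv.homothetyUnitsMulHom c₂ (Units.mk0 m m0)).symm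
  have hT : ∀ x, T (AffineMap.homothety c₂ m x) = x := by
    intro x
    have := (AffineEquiv.homothetyUnitsMulHom c₂ (Units.mk0 m m0)).symm_apply_apply x
    simpa [T] using this
  have hT' : ∀ x, AffineMap.homothety c₂ m (T x) = x := by
    intro x
    have := (AffineEquiv.homothetyUnitsMulHom c₂ (Units.mk0 m m0)).apply_symm_apply x
    simpa [T] using this
  refine ⟨T, (1 - l * m)⁻¹ • ((l * (1 - m)) • c₂ + (1 - l) • c₁), ?_, ?_⟩
  · rintro _ ⟨x, hx, rfl⟩
    obtain ⟨y, hy, rfl⟩ := g₂ hx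
    rw [hT]; exact hy
  · intro y hy
    obtain ⟨x, hx, rfl⟩ := g₁ hy
    refine ⟨T x, ⟨x, hx, rfl⟩, ?_⟩
    conv_rhs => rw [← hT' x]
    generalize T x = z
    simp only [AffineMap.homothety_apply]
    ext
    · simp; field_simp; ring
    · simp; field_simp; ring
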